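/- arXiv:2605.09214 — 8 statements merged into one kernel-verified Lean document; each statement's English description precedes it below -/
import Mathlib

section
/- Let r, r̂ : 𝒜 → [0,1] and let π̂ be the maximizer of J(·; r̂) over Δ(𝒜). Then there exists ū ∈ [0,1] such that, writing r_ū = (1−ū) r + ū r̂ and π_ū for the (unique) maximizer of J(·; r_ū), the suboptimality satisfies the exact identity SubOpt(π̂) = (η/2) · ( Σ_a (π_ū(a)²/π^ref(a)) (r(a) − r̂(a))² − ( Σ_a (π_ū(a)²/π^ref(a)) (r(a) − r̂(a)) )² / ( Σ_a π_ū(a)²/π^ref(a) ) ). -/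
open Finset

/-- Forward-KL-regularized objective `J(π; g) = ⟨g, π⟩ - η⁻¹ KL(π^ref ‖ π)`
for a bandit with finite action set. -/
noncomputable def J {A : Type*} [Fintype A] (η : ℝ) (pref g p : A → ℝ) : ℝ :=
  ∑ a, g a * p a - η⁻¹ * ∑ a, pref a * Real.log (pref a / p a)

/-- `p` maximizes `J(·; g)` over the simplex `Δ(A)` (on which the objective is `-∞`
unless the policy has full support, so it suffices to compare with full-support
distributions). -/
def IsMaximizer {A : Type*} [Fintype A] (η : ℝ) (pref g p : A → ℝ) : Prop :=
  (∀ a, 0 ≤ p a) ∧ ∑ a, p a = 1 ∧ (∀ a, 0 < p a) ∧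
    ∀ q : A → ℝ, (∀ a, 0 ≤ q a) → ∑ a, q a = 1 → (∀ a, 0 < q a) →
      J η pref g q ≤ J η pref g p

lemma aux_exists {A : Type*} [Fintype A] (η : ℝ) (hη : 0 < η)
    (pref : A → ℝ) (hpref : ∀ a, 0 < pref a) (hprefsum : ∑ a, pref a = 1) (g : A → ℝ) :
    ∃ l : ℝ, (∀ a, g a < l) ∧ ∑ a, pref a / (η * (l - g a)) = 1 := by
  have hne : Nonempty A := by
    by_contra h
    rw [not_nonempty_iff] at h
    simp at hprefsum
  obtain ⟨a0, ha0⟩ := Finite.exists_max g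
  have hle1 : pref a0 ≤ 1 := by
    rw [← hprefsum]
    exact Finset.single_le_sum (fun a _ => (hpref a).le) (Finset.mem_univ a0)
  have hp0 := hpref a0
  have hpos : ∀ l ∈ Set.Icc (g a0 + pref a0 / η) (g a0 + 1 / η), ∀ a, 0 < l - g a := by
    intro l hl a
    have := ha0 a
    have h2 : 0 < pref a0 / η := by positivity
    linarith [hl.1]
  have hcont : ContinuousOn (fun l : ℝ => ∑ a, pref a / (η * (l - g a)))
      (Set.Icc (g a0 + pref a0 / η) (g a0 + 1 / η)) := by
    refine continuousOn_finsetSum _ fun a _ => ?_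
    refine ContinuousOn.div (by fun_prop) (by fun_prop) fun l hl => ?_
    have := hpos l hl a
    positivity
  have hab : g a0 + pref a0 / η ≤ g a0 + 1 / η := by gcongr
  have hmem : (1:ℝ) ∈ Set.Icc (∑ a, pref a / (η * ((g a0 + 1 / η) - g a)))
      (∑ a, pref a / (η * ((g a0 + pref a0 / η) - g a))) := by
    constructor
    · refine (Finset.sum_le_sum fun a _ => ?_).trans hprefsum.le
      apply div_le_self (hpref a).le
      have : η * (g a0 + 1 / η - g a) = 1 + η * (g a0 - g a) := by field_simp; ring
      rw [this]
      have := mul_nonneg hη.le (sub_nonneg.2 (ha0 a))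
      linarith
    · have h1 : pref a0 / (η * ((g a0 + pref a0 / η) - g a0)) = 1 := by
        have : η * ((g a0 + pref a0 / η) - g a0) = pref a0 := by field_simp; ring
        rw [this, div_self hp0.ne']
      have h2 := Finset.single_le_sum (f := fun a => pref a / (η * ((g a0 + pref a0 / η) - g a)))
        (fun a _ => by
          have := hpos _ (Set.left_mem_Icc.2 hab) a
          have := hpref a
          positivity) (Finset.mem_univ a0)
      linarith
  obtain ⟨l, hl, hl2⟩ := intermediate_value_Icc' hab hcont hmem
  exact ⟨l, fun a => by linarith [hpos l hl a], hl2⟩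

lemma aux_unique {A : Type*} [Fintype A] (η : ℝ) (hη : 0 < η)
    (pref : A → ℝ) (hpref : ∀ a, 0 < pref a) (g : A → ℝ) (l : ℝ) (hl : ∀ a, g a < l)
    (hs : ∑ a, pref a / (η * (l - g a)) = 1) (q : A → ℝ) (hq : IsMaximizer η pref g q) :
    q = fun a => pref a / (η * (l - g a)) := by
  obtain ⟨-, hq1, hqpos, hmax⟩ := hq
  set p : A → ℝ := fun a => pref a / (η * (l - g a)) with hp
  have hppos : ∀ a, 0 < p a := fun a => by
    have := hpref a
    have := sub_pos.2 (hl a)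
    simp only [hp]; positivity
  have hfoc : ∀ a, pref a = η * (l - g a) * p a := fun a => by
    have := sub_pos.2 (hl a)
    simp only [hp]; field_simp
  have hJ := hmax p (fun a => (hppos a).le) hs hppos
  by_contra hne
  obtain ⟨b, hb⟩ := Function.ne_iff.1 hne
  have hlt : ∑ a, (pref a * Real.log (pref a / p a) - pref a * Real.log (pref a / q a))
      < ∑ a, η * (l - g a) * (q a - p a) := by
    have key : ∀ a, (pref a * Real.log (pref a / p a) - pref a * Real.log (pref a / q a))
        = pref a * Real.log (q a / p a) := fun a => by
      rw [Real.log_div (hpref a).ne' (hppos a).ne', Real.log_div (hpref a).ne' (hqpos a).ne',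
        Real.log_div (hqpos a).ne' (hppos a).ne']; ring
    have key2 : ∀ a, η * (l - g a) * (q a - p a) = pref a * (q a / p a - 1) := fun a => by
      have := (hppos a).ne'
      rw [hfoc a]; field_simp
    refine Finset.sum_lt_sum (fun a _ => ?_) ⟨b, Finset.mem_univ b, ?_⟩
    · rw [key, key2]
      exact mul_le_mul_of_nonneg_left
        (Real.log_le_sub_one_of_pos (div_pos (hqpos a) (hppos a))) (hpref a).le
    · rw [key, key2]
      refine mul_lt_mul_of_pos_left
        (Real.log_lt_sub_one_of_pos (div_pos (hqpos b) (hppos b)) ?_) (hpref b)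
      rw [Ne, div_eq_one_iff_eq (hppos b).ne']
      exact hb
  have e : ∑ a, η * (l - g a) * (q a - p a) = η * (∑ a, g a * p a - ∑ a, g a * q a) := by
    have : ∀ a, η * (l - g a) * (q a - p a) =
        η * l * q a - η * l * p a + η * (g a * p a) - η * (g a * q a) := fun a => by ring
    simp only [this, Finset.sum_add_distrib, Finset.sum_sub_distrib, ← Finset.mul_sum]
    rw [hq1, hs]; ring
  rw [e, Finset.sum_sub_distrib] at hlt
  unfold J at hJ
  have h3 := mul_lt_mul_of_pos_left hlt (inv_pos.2 hη)
  rw [inv_mul_cancel_left₀ hη.ne'] at h3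
  linarith

lemma aux_deriv {A : Type*} [Fintype A] [Nonempty A] (η : ℝ)
    (pref : A → ℝ) (hpref : ∀ a, 0 < pref a) (r d : A → ℝ) (hd : ∀ a, |d a| ≤ 1)
    (l : ℝ → ℝ) (hl : ∀ u a, r a + u * d a < l u)
    (hs : ∀ u, ∑ a, pref a / (l u - (r a + u * d a)) = η) (u : ℝ) :
    HasDerivAt l ((∑ a, pref a / (l u - (r a + u * d a)) ^ 2 * d a) /
      ∑ a, pref a / (l u - (r a + u * d a)) ^ 2) u := by
  set c : ℝ → A → ℝ := fun v a => l v - (r a + v * d a) with hc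
  have hcpos : ∀ v a, 0 < c v a := fun v a => sub_pos.2 (hl v a)
  set w : ℝ → A → ℝ := fun v a => pref a / (c u a * c v a) with hw
  have hwpos : ∀ v a, 0 < w v a := fun v a =>
    div_pos (hpref a) (mul_pos (hcpos u a) (hcpos v a))
  have hD : ∀ v, 0 < ∑ a, w v a := fun v => Finset.sum_pos (fun a _ => hwpos v a) univ_nonempty
  have hslope : ∀ v, l v - l u = (v - u) * ((∑ a, w v a * d a) / ∑ a, w v a) := by
    intro v
    have h0 : ∑ a, (pref a / c u a - pref a / c v a) = 0 := by
      rw [Finset.sum_sub_distrib]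
      exact sub_eq_zero.2 ((hs u).trans (hs v).symm)
    have h1 : ∀ a, pref a / c u a - pref a / c v a
        = (l v - l u) * w v a - (v - u) * (w v a * d a) := fun a => by
      have h1 := (hcpos u a).ne'
      have h2 := (hcpos v a).ne'
      have h3 : l v - l u = c v a - c u a + (v - u) * d a := by simp only [hc]; ring
      rw [h3]; simp only [hw]; field_simp; ring
    simp only [h1, Finset.sum_sub_distrib, ← Finset.mul_sum] at h0
    rw [mul_div_assoc', eq_div_iff (hD v).ne']
    linarith
  have hlip : ∀ v, |l v - l u| ≤ |v - u| := by
    intro v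
    rw [hslope v, abs_mul]
    refine mul_le_of_le_one_right (abs_nonneg _) ?_
    rw [abs_div, abs_of_pos (hD v), div_le_one (hD v)]
    refine (Finset.abs_sum_le_sum_abs _ _).trans (Finset.sum_le_sum fun a _ => ?_)
    rw [abs_mul, abs_of_pos (hwpos v a)]
    exact mul_le_of_le_one_right (hwpos v a).le (hd a)
  have hcont : ContinuousAt l u := by
    rw [Metric.continuousAt_iff]
    intro ε hε
    exact ⟨ε, hε, fun {v} hv => lt_of_le_of_lt (hlip v) hv⟩
  have hwc : ∀ a, ContinuousAt (fun v => w v a) u := fun a => by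
    simp only [hw, hc]
    refine ContinuousAt.div (by fun_prop) (by fun_prop) ?_
    exact (mul_pos (hcpos u a) (hcpos u a)).ne'
  have hqc : ContinuousAt (fun v => (∑ a, w v a * d a) / ∑ a, w v a) u := by
    refine ContinuousAt.div (by fun_prop) (by fun_prop) (hD u).ne'
  rw [hasDerivAt_iff_tendsto_slope]
  have h2 : (∑ a, pref a / (c u a) ^ 2 * d a) / ∑ a, pref a / (c u a) ^ 2
      = (∑ a, w u a * d a) / ∑ a, w u a := by
    simp only [hw, pow_two]
  change Filter.Tendsto _ _ (nhds ((∑ a, pref a / (c u a) ^ 2 * d a) / ∑ a, pref a / (c u a) ^ 2))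
  rw [h2]
  refine (hqc.tendsto.mono_left nhdsWithin_le_nhds).congr' ?_
  filter_upwards [self_mem_nhdsWithin] with v hv
  rw [slope_def_field, hslope v, mul_div_cancel_left₀]
  exact sub_ne_zero.2 hv

/-- Mean-value-type exact identity for the forward-KL-regularized
suboptimality of the maximizer `π̂` of `J(·; r̂)`. -/
theorem stmt2 {A : Type*} [Fintype A]
    (η : ℝ) (hη : 0 < η)
    (pref : A → ℝ) (hpref : ∀ a, 0 < pref a) (hprefsum : ∑ a, pref a = 1)
    (r rhat : A → ℝ)
    (hr : ∀ a, r a ∈ Set.Icc (0 : ℝ) 1) (hrhat : ∀ a, rhat a ∈ Set.Icc (0 : ℝ) 1)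
    (πstar : A → ℝ) (hstar : IsMaximizer η pref r πstar)
    (πhat : A → ℝ) (hhat : IsMaximizer η pref rhat πhat) :
    ∃ u ∈ Set.Icc (0 : ℝ) 1, ∀ πu : A → ℝ,
      IsMaximizer η pref (fun a => (1 - u) * r a + u * rhat a) πu →
      J η pref r πstar - J η pref r πhat =
        η / 2 * ((∑ a, (πu a) ^ 2 / pref a * (r a - rhat a) ^ 2) -
          (∑ a, (πu a) ^ 2 / pref a * (r a - rhat a)) ^ 2 /
            (∑ a, (πu a) ^ 2 / pref a)) := by
  have hne : Nonempty A := by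
    by_contra h
    rw [not_nonempty_iff] at h
    simp at hprefsum
  obtain ⟨d, hd⟩ : ∃ d : A → ℝ, ∀ a, d a = rhat a - r a := ⟨_, fun _ => rfl⟩
  have hd1 : ∀ a, |d a| ≤ 1 := fun a => by
    rw [hd, abs_le]
    have h1 := hr a
    have h2 := hrhat a
    constructor <;> linarith [h1.1, h1.2, h2.1, h2.2]
  choose l hl hs using fun u : ℝ =>
    aux_exists η hη pref hpref hprefsum (fun a => r a + u * d a)
  obtain ⟨p, hp⟩ : ∃ p : ℝ → A → ℝ, ∀ u a, p u a = pref a / (η * (l u - (r a + u * d a))) :=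
    ⟨_, fun _ _ => rfl⟩
  have hcpos : ∀ u a, 0 < l u - (r a + u * d a) := fun u a => sub_pos.2 (hl u a)
  have hppos : ∀ u a, 0 < p u a := fun u a => by
    have := hcpos u a
    have := hpref a
    rw [hp]; positivity
  have hps : ∀ u, ∑ a, p u a = 1 := fun u => by simp only [hp]; exact hs u
  have huniq : ∀ u q, IsMaximizer η pref (fun a => r a + u * d a) q → q = p u := by
    intro u q hq
    rw [aux_unique η hη pref hpref _ (l u) (hl u) (hs u) q hq]
    funext a
    rw [hp]
  have hstar' : πstar = p 0 := huniq 0 _ (by simpa using hstar)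
  have hhat' : πhat = p 1 := huniq 1 _ (by simpa [hd] using hhat)
  -- weights
  obtain ⟨w, hw⟩ : ∃ w : ℝ → A → ℝ, ∀ u a, w u a = (p u a) ^ 2 / pref a := ⟨_, fun _ _ => rfl⟩
  obtain ⟨m, hm⟩ : ∃ m : ℝ → ℝ, ∀ u, m u = (∑ a, w u a * d a) / ∑ a, w u a := ⟨_, fun _ => rfl⟩
  have hwpos : ∀ u, 0 < ∑ a, w u a := fun u => Finset.sum_pos (fun a _ => by
    have := hppos u a
    have := hpref a
    rw [hw]; positivity) univ_nonempty
  have hwc : ∀ u a, pref a / (l u - (r a + u * d a)) ^ 2 = η ^ 2 * w u a := fun u a => by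
    have := (hcpos u a).ne'
    have := (hpref a).ne'
    rw [hw, hp]; field_simp
  have hlder : ∀ u, HasDerivAt l (m u) u := by
    intro u
    have h := aux_deriv η pref hpref r d hd1 l hl (fun v => by
      have h1 := hs v
      have h2 : ∀ a, pref a / (l v - (r a + v * d a))
          = η * (pref a / (η * (l v - (r a + v * d a)))) := fun a => by
        have := (hcpos v a).ne'
        field_simp
      simp only [h2, ← Finset.mul_sum]
      rw [h1, mul_one]) u
    simp only [hwc, mul_assoc, ← Finset.mul_sum] at h
    rw [mul_div_mul_left _ _ (by positivity), ← hm] at h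
    exact h
  have hpder : ∀ u a, HasDerivAt (fun v => p v a) (η * w u a * (d a - m u)) u := by
    intro u a
    have hc0 := (hcpos u a).ne'
    have h1 : HasDerivAt (fun v => η * (l v - (r a + v * d a))) (η * (m u - d a)) u := by
      have := (((hlder u).sub (((hasDerivAt_id u).mul_const (d a)).const_add (r a))).const_mul η)
      simpa using this
    have h2 := (h1.fun_inv (mul_ne_zero hη.ne' hc0)).const_mul (pref a)
    simp only [hp, div_eq_mul_inv]
    refine h2.congr_deriv ?_
    have := (hpref a).ne'
    rw [hw, hp]; field_simp; ring
  have hsum0 : ∀ u, ∑ a, η * w u a * (d a - m u) = 0 := by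
    intro u
    have : ∀ a, η * w u a * (d a - m u) = η * (w u a * d a) - η * m u * w u a := fun a => by ring
    simp only [this, Finset.sum_sub_distrib, ← Finset.mul_sum]
    rw [hm]
    have := (hwpos u).ne'
    field_simp; ring
  have hJder : ∀ u, HasDerivAt (fun v => J η pref r (p v))
      (-(u * ∑ a, d a * (η * w u a * (d a - m u)))) u := by
    intro u
    have h1 : HasDerivAt (fun v => ∑ a, r a * p v a)
        (∑ a, r a * (η * w u a * (d a - m u))) u :=
      HasDerivAt.fun_sum fun a _ => (hpder u a).const_mul (r a)
    have h2 : HasDerivAt (fun v => ∑ a, pref a * Real.log (pref a / p v a))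
        (∑ a, pref a * (-((η * w u a * (d a - m u)) / p u a))) u := by
      refine HasDerivAt.fun_sum fun a _ => ?_
      have h3 := (((hpder u a).log (hppos u a).ne').const_sub (Real.log (pref a))).const_mul (pref a)
      refine h3.congr_of_eventuallyEq (Filter.Eventually.of_forall fun v => ?_)
      simp only
      rw [Real.log_div (hpref a).ne' (hppos v a).ne']
    have h3 := h1.sub (h2.const_mul η⁻¹)
    refine HasDerivAt.congr_deriv (f := fun v => J η pref r (p v)) h3 ?_
    have h4 : l u * ∑ a, η * w u a * (d a - m u) = 0 := by rw [hsum0, mul_zero]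
    have h5 : ∀ a, r a * (η * w u a * (d a - m u))
        - η⁻¹ * (pref a * (-((η * w u a * (d a - m u)) / p u a)))
        = l u * (η * w u a * (d a - m u)) - u * (d a * (η * w u a * (d a - m u))) := fun a => by
      have h6 : η⁻¹ * (pref a / p u a) = l u - (r a + u * d a) := by
        have := (hcpos u a).ne'
        have := (hpref a).ne'
        rw [hp]; field_simp
      have h7 : η⁻¹ * (pref a * (-((η * w u a * (d a - m u)) / p u a)))
          = -(η⁻¹ * (pref a / p u a)) * (η * w u a * (d a - m u)) := by ring
      rw [h7, h6]; ring
    rw [Finset.mul_sum, ← Finset.sum_sub_distrib, Finset.sum_congr rfl (fun a _ => h5 a),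
      Finset.sum_sub_distrib, ← Finset.mul_sum, ← Finset.mul_sum, h4, zero_sub]
  have hmvt := exists_ratio_hasDerivAt_eq_ratio_slope (fun v => J η pref r (p v))
    (fun u => (-(u * ∑ a, d a * (η * w u a * (d a - m u))))) (a := 0) (b := 1) zero_lt_one
    (fun x _ => (hJder x).continuousAt.continuousWithinAt) (fun x _ => hJder x)
    (fun v => v ^ 2) (fun v => 2 * v) (by fun_prop)
    (fun x _ => by simpa using hasDerivAt_pow 2 x)
  obtain ⟨c, hc, hc2⟩ := hmvt
  refine ⟨c, ⟨hc.1.le, hc.2.le⟩, fun πu hπ => ?_⟩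
  have hπu : πu = p c := huniq c _ (by
    convert hπ using 2 with a
    rw [hd]; ring)
  have hc0 : c ≠ 0 := hc.1.ne'
  rw [hstar', hhat', hπu]
  have e1 : ∀ a, r a - rhat a = - d a := fun a => by rw [hd]; ring
  have e2 : ∑ a, d a * (η * w c a * (d a - m c)) =
      η * (∑ a, w c a * d a ^ 2 - (∑ a, w c a * d a) ^ 2 / ∑ a, w c a) := by
    have : ∀ a, d a * (η * w c a * (d a - m c)) = η * (w c a * d a ^ 2) - η * m c * (w c a * d a) :=
      fun a => by ring
    simp only [this, Finset.sum_sub_distrib, ← Finset.mul_sum]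
    rw [hm]; ring
  simp only [e1, ← hw, mul_neg, Finset.sum_neg_distrib, neg_sq]
  rw [e2] at hc2
  have : c * (J η pref r (p 0) - J η pref r (p 1)) = c * (η / 2 *
    (∑ a, w c a * d a ^ 2 - (∑ a, w c a * d a) ^ 2 / ∑ a, w c a)) := by linarith
  exact mul_left_cancel₀ hc0 this
end

section
/- Let r, r̂ : 𝒜 → [0,1], and for u ∈ [0,1] let r_u = (1−u) r + u r̂ and π_u be the unique maximizer of J(·; r_u) over Δ(𝒜). Define F(u) = (η/2) · ( Σ_a (π_u(a)²/π^ref(a)) g(a)² − ( Σ_a (π_u(a)²/π^ref(a)) g(a) )² / Z_u ), where g = r − r̂, Z_u = Σ_a π_u(a)²/π^ref(a), w_u(a) = π_u(a)/π^ref(a), and μ_u(a) = (π_u(a)²/π^ref(a))/Z_u is a probability distribution on 𝒜. Then F is differentiable on (0,1) with F′(u) = −η² Z_u · E_{a∼μ_u}[ w_u(a) ( g(a) − E_{a∼μ_u} g(a) )³ ] for every u ∈ (0,1). -/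
open Finset

lemma foc {A : Type*} [Fintype A] (η : ℝ) (hη : 0 < η)
    (pref g p : A → ℝ) (hpref : ∀ a, 0 < pref a) (h : IsMaximizer η pref g p) :
    ∃ l : ℝ, ∀ a, p a * (η * (l - g a)) = pref a := by
  obtain ⟨-, hs, hp, hmax⟩ := h
  set c : A → ℝ := fun a => g a + η⁻¹ * (pref a / p a) with hc
  set m : ℝ := ∑ a, p a * c a with hm
  set d : A → ℝ := fun a => p a * (c a - m) with hd
  have hd0 : ∑ a, d a = 0 := by
    simp only [hd, mul_sub, Finset.sum_sub_distrib, ← Finset.sum_mul, hs, ← hm]; ring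
  have hder : HasDerivAt (fun t : ℝ => J η pref g (fun a => p a + t * d a))
      (∑ a, g a * d a - η⁻¹ * ∑ a, -(pref a / p a * d a)) 0 := by
    unfold J
    have h1 : ∀ a, HasDerivAt (fun t : ℝ => p a + t * d a) (d a) 0 := by
      intro a
      simpa using ((hasDerivAt_id (0 : ℝ)).mul_const (d a)).const_add (p a)
    refine HasDerivAt.sub (HasDerivAt.fun_sum fun a _ => (h1 a).const_mul (g a))
      (HasDerivAt.const_mul _ (HasDerivAt.fun_sum fun a _ => ?_))
    have hpa := hp a
    have hra := hpref a
    have h2 := (((hasDerivAt_const (0 : ℝ) (pref a)).div (h1 a)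
      (by simpa using hpa.ne')).log (by simp [hpa.ne', hra.ne'])).const_mul (pref a)
    refine h2.congr_deriv ?_
    simp
    field_simp
  have hev : ∀ᶠ t : ℝ in nhds 0, ∀ a, 0 < p a + t * d a := by
    rw [Filter.eventually_all]
    intro a
    have : ContinuousAt (fun t : ℝ => p a + t * d a) 0 := by fun_prop
    exact this.eventually (lt_mem_nhds (by simpa using hp a))
  have hloc : IsLocalMax (fun t : ℝ => J η pref g (fun a => p a + t * d a)) 0 := by
    filter_upwards [hev] with t ht
    simp only [zero_mul, add_zero]
    refine hmax _ (fun a => (ht a).le) ?_ ht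
    rw [Finset.sum_add_distrib, ← Finset.mul_sum, hd0, hs]; ring
  have hz := hloc.hasDerivAt_eq_zero hder
  have hsq : ∑ a, p a * (c a - m) ^ 2 = 0 := by
    have : ∑ a, p a * (c a - m) ^ 2 = (∑ a, g a * d a - η⁻¹ * ∑ a, -(pref a / p a * d a))
        - m * ∑ a, d a := by
      simp only [Finset.mul_sum, ← Finset.sum_sub_distrib]
      refine Finset.sum_congr rfl fun a _ => ?_
      simp only [hd, hc]; ring
    rw [this, hz, hd0]; ring
  refine ⟨m, fun a => ?_⟩
  have h0 := (Finset.sum_eq_zero_iff_of_nonneg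
    (fun a _ => mul_nonneg (hp a).le (sq_nonneg (c a - m)))).1 hsq a (Finset.mem_univ a)
  have h3 : c a = m := by
    have := (mul_eq_zero.1 h0).resolve_left (hp a).ne'
    exact sub_eq_zero.1 (pow_eq_zero_iff (two_ne_zero) |>.1 this)
  rw [← h3]
  simp only [hc]
  have := (hp a).ne'
  field_simp
  ring

/-- Derivative of the mean-value remainder `F(u)` along the reward
interpolation `r_u = (1-u) r + u r̂`, where `π_u` is the (unique) maximizer of
`J(·; r_u)`:  `F′(u) = -η² Z_u · E_{a∼μ_u}[ w_u(a) (g(a) - E_{μ_u} g)³ ]`. -/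
theorem stmt3 {A : Type*} [Fintype A]
    (η : ℝ) (hη : 0 < η)
    (pref : A → ℝ) (hpref : ∀ a, 0 < pref a) (hprefsum : ∑ a, pref a = 1)
    (r rhat : A → ℝ)
    (hr : ∀ a, r a ∈ Set.Icc (0 : ℝ) 1) (hrhat : ∀ a, rhat a ∈ Set.Icc (0 : ℝ) 1)
    (π : ℝ → A → ℝ)
    (hπ : ∀ u ∈ Set.Icc (0 : ℝ) 1,
      IsMaximizer η pref (fun a => (1 - u) * r a + u * rhat a) (π u)) :
    ∀ u ∈ Set.Ioo (0 : ℝ) 1,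
      HasDerivAt
        (fun u' => η / 2 * ((∑ a, (π u' a) ^ 2 / pref a * (r a - rhat a) ^ 2) -
          (∑ a, (π u' a) ^ 2 / pref a * (r a - rhat a)) ^ 2 /
            (∑ a, (π u' a) ^ 2 / pref a)))
        (-η ^ 2 * (∑ a, (π u a) ^ 2 / pref a) *
          ∑ a, ((π u a) ^ 2 / pref a / (∑ b, (π u b) ^ 2 / pref b)) *
            ((π u a / pref a) *
              ((r a - rhat a) -
                ∑ b, ((π u b) ^ 2 / pref b / (∑ b', (π u b') ^ 2 / pref b')) *
                  (r b - rhat b)) ^ 3))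
        u := by
  intro u hu
  have hmem : ∀ᶠ v in nhds u, v ∈ Set.Icc (0 : ℝ) 1 :=
    Filter.mem_of_superset (Ioo_mem_nhds hu.1 hu.2) Set.Ioo_subset_Icc_self
  have huI : u ∈ Set.Icc (0 : ℝ) 1 := Set.Ioo_subset_Icc_self hu
  have hex : ∀ v, ∃ l : ℝ, v ∈ Set.Icc (0 : ℝ) 1 →
      ∀ a, π v a * (η * (l - ((1 - v) * r a + v * rhat a))) = pref a := by
    intro v
    by_cases hv : v ∈ Set.Icc (0 : ℝ) 1
    · obtain ⟨l, hl⟩ := foc η hη pref _ (π v) hpref (hπ v hv)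
      exact ⟨l, fun _ => hl⟩
    · exact ⟨0, fun h => absurd h hv⟩
  choose L hL using hex
  have hpos : ∀ v ∈ Set.Icc (0 : ℝ) 1, ∀ a, 0 < π v a := fun v hv => (hπ v hv).2.2.1
  have hsum : ∀ v ∈ Set.Icc (0 : ℝ) 1, ∑ a, π v a = 1 := fun v hv => (hπ v hv).2.1
  have hne : Nonempty A := by
    by_contra hA
    rw [not_nonempty_iff] at hA
    simp at hprefsum
  -- difference formula
  have hdiff : ∀ v ∈ Set.Icc (0 : ℝ) 1, ∀ a, π v a - π u a =
      -η * (π u a * π v a / pref a * (L v - L u) +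
        (v - u) * (π u a * π v a / pref a * (r a - rhat a))) := by
    intro v hv a
    have h1 := hL v hv a
    have h2 := hL u huI a
    have h3 := (hpref a).ne'
    field_simp
    linear_combination (-π v a) * h2 + (π u a) * h1
  have hS : ∀ v ∈ Set.Icc (0 : ℝ) 1, 0 < ∑ a, π u a * π v a / pref a := fun v hv =>
    Finset.sum_pos (fun a _ => div_pos (mul_pos (hpos u huI a) (hpos v hv a)) (hpref a))
      Finset.univ_nonempty
  have hLd : ∀ v ∈ Set.Icc (0 : ℝ) 1, (L v - L u) * ∑ a, π u a * π v a / pref a =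
      -(v - u) * ∑ a, π u a * π v a / pref a * (r a - rhat a) := by
    intro v hv
    have h0 : ∑ a, (π v a - π u a) = 0 := by
      rw [Finset.sum_sub_distrib, hsum v hv, hsum u huI, sub_self]
    rw [Finset.sum_congr rfl fun a _ => hdiff v hv a, ← Finset.mul_sum,
      Finset.sum_add_distrib, ← Finset.sum_mul, ← Finset.mul_sum] at h0
    have := (mul_eq_zero.1 h0).resolve_left (neg_ne_zero.2 hη.ne')
    linear_combination this
  have hLip : ∀ v ∈ Set.Icc (0 : ℝ) 1, |L v - L u| ≤ |v - u| := by
    intro v hv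
    have h1 := hS v hv
    have h2 : |∑ a, π u a * π v a / pref a * (r a - rhat a)| ≤ ∑ a, π u a * π v a / pref a := by
      refine (Finset.abs_sum_le_sum_abs _ _).trans (Finset.sum_le_sum fun a _ => ?_)
      have hp := div_pos (mul_pos (hpos u huI a) (hpos v hv a)) (hpref a)
      rw [abs_mul, abs_of_pos hp]
      refine mul_le_of_le_one_right hp.le ?_
      rw [abs_le]
      constructor <;> linarith [(hr a).1, (hr a).2, (hrhat a).1, (hrhat a).2]
    have h3 := congrArg abs (hLd v hv)
    rw [abs_mul, abs_mul, abs_neg, abs_of_pos h1] at h3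
    refine le_of_mul_le_mul_right ?_ h1
    rw [h3]
    exact mul_le_mul_of_nonneg_left h2 (abs_nonneg _)
  have hLc : ContinuousAt L u := by
    rw [ContinuousAt, tendsto_iff_norm_sub_tendsto_zero]
    refine squeeze_zero' (Filter.Eventually.of_forall fun v => norm_nonneg _)
      (hmem.mono fun v hv => hLip v hv) ?_
    have : ContinuousAt (fun v : ℝ => |v - u|) u := by fun_prop
    simpa [ContinuousAt] using this
  have hform : ∀ v ∈ Set.Icc (0 : ℝ) 1, ∀ a,
      π v a = pref a / (η * (L v - ((1 - v) * r a + v * rhat a))) := by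
    intro v hv a
    have h1 := hL v hv a
    rw [eq_div_iff, h1]
    intro h0
    rw [h0, mul_zero] at h1
    exact (hpref a).ne h1
  have hden : ∀ a, η * (L u - ((1 - u) * r a + u * rhat a)) ≠ 0 := by
    intro a h0
    have h1 := hL u huI a
    rw [h0, mul_zero] at h1
    exact (hpref a).ne h1
  have hπc : ∀ a, ContinuousAt (fun v => π v a) u := by
    intro a
    have : ContinuousAt (fun v => pref a / (η * (L v - ((1 - v) * r a + v * rhat a)))) u := by
      refine ContinuousAt.div continuousAt_const ?_ (hden a)
      exact continuousAt_const.mul (hLc.sub (by fun_prop))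
    exact this.congr (hmem.mono fun v hv => (hform v hv a).symm)
  set Z : ℝ := ∑ a, (π u a) ^ 2 / pref a with hZ
  set B : ℝ := ∑ a, (π u a) ^ 2 / pref a * (r a - rhat a) with hB
  have hZpos : 0 < Z :=
    Finset.sum_pos (fun a _ => div_pos (pow_pos (hpos u huI a) 2) (hpref a))
      Finset.univ_nonempty
  have hφ : ContinuousAt (fun v => (∑ a, π u a * π v a / pref a * (r a - rhat a)) /
      ∑ a, π u a * π v a / pref a) u := by
    refine ContinuousAt.div ?_ ?_ (hS u huI).ne'
    · exact tendsto_finsetSum _ fun a _ =>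
        ((continuousAt_const.mul (hπc a)).div_const _).mul continuousAt_const
    · exact tendsto_finsetSum _ fun a _ => (continuousAt_const.mul (hπc a)).div_const _
  set m : ℝ := B / Z with hm
  have hφu : (∑ a, π u a * π u a / pref a * (r a - rhat a)) /
      (∑ a, π u a * π u a / pref a) = m := by
    simp only [hm, hB, hZ, sq]
  have hπd : ∀ a, HasDerivAt (fun v => π v a)
      (-η * ((π u a) ^ 2 / pref a * ((r a - rhat a) - m))) u := by
    intro a
    rw [hasDerivAt_iff_tendsto_slope]
    have hc : ContinuousAt (fun v => -η * (π u a * π v a / pref a * ((r a - rhat a) -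
        (∑ a, π u a * π v a / pref a * (r a - rhat a)) / ∑ a, π u a * π v a / pref a))) u :=
      continuousAt_const.mul (((continuousAt_const.mul (hπc a)).div_const _).mul
        (continuousAt_const.sub hφ))
    have ht := hc.tendsto.mono_left (nhdsWithin_le_nhds (s := {u}ᶜ))
    simp only [hφu] at ht
    rw [← sq] at ht
    refine ht.congr' ?_
    filter_upwards [nhdsWithin_le_nhds hmem, self_mem_nhdsWithin] with v hv hvu
    have hvu' : v - u ≠ 0 := sub_ne_zero.2 hvu
    have hLv : L v - L u = -(v - u) * ((∑ a, π u a * π v a / pref a * (r a - rhat a)) /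
        ∑ a, π u a * π v a / pref a) := by
      rw [← mul_div_assoc, eq_div_iff (hS v hv).ne', hLd v hv]
    rw [slope_def_field, hdiff v hv a, hLv, eq_div_iff hvu']
    ring
  have hmom : ∀ f : A → ℝ, HasDerivAt (fun v => ∑ a, (π v a) ^ 2 / pref a * f a)
      (∑ a, -2 * η * ((π u a) ^ 3 / (pref a) ^ 2 * ((r a - rhat a) - m) * f a)) u := by
    intro f
    refine HasDerivAt.fun_sum fun a _ => ?_
    refine ((((hπd a).pow 2).div_const (pref a)).mul_const (f a)).congr_deriv ?_
    have := (hpref a).ne'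
    simp
    field_simp
  have hA' := hmom fun a => (r a - rhat a) ^ 2
  have hB' := hmom fun a => r a - rhat a
  have hZ' := hmom fun _ => 1
  simp only [mul_one] at hZ'
  refine ((hA'.sub ((hB'.pow 2).div hZ' hZpos.ne')).const_mul (η / 2)).congr_deriv ?_
  have hmean : ∑ b, (π u b) ^ 2 / pref b / Z * (r b - rhat b) = m := by
    rw [hm, hB, Finset.sum_div]
    exact Finset.sum_congr rfl fun a _ => by ring
  rw [hmean]
  have hBm : B = m * Z := by rw [hm, div_mul_cancel₀ _ hZpos.ne']
  simp only [Pi.pow_apply, ← hZ, ← hB]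
  rw [hBm]
  have key : ∀ x y w : ℝ, η / 2 * (x - (((2 : ℕ) : ℝ) * (m * Z) ^ (2 - 1) * y * Z -
      (m * Z) ^ 2 * w) / Z ^ 2) = η / 2 * (x - 2 * m * y + m ^ 2 * w) := by
    intro x y w
    have := hZpos.ne'
    field_simp
    push_cast
    ring
  rw [key]
  simp only [Finset.mul_sum, ← Finset.sum_sub_distrib, ← Finset.sum_add_distrib]
  refine Finset.sum_congr rfl fun a _ => ?_
  have h1 := hZpos.ne'
  have h2 := (hpref a).ne'
  field_simp
  ring
end

section
/- Let π̂ be any probability distribution on 𝒜 with full support. Then the forward-KL-regularized suboptimality satisfies the exact identity SubOpt(π̂) = η^{-1} Σ_{a ∈ 𝒜} π^ref(a) · ψ( π̂(a)/π*(a) ), where ψ(x) = x − 1 − log x. -/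
open Finset

/-- Learner-agnostic exact suboptimality decomposition: for any
full-support distribution `π̂`,
`SubOpt(π̂) = η⁻¹ ∑_a π^ref(a) ψ(π̂(a)/π*(a))`, where `ψ(x) = x - 1 - log x`. -/
theorem stmt6 {A : Type*} [Fintype A]
    (η : ℝ) (hη : 0 < η)
    (pref : A → ℝ) (hpref : ∀ a, 0 < pref a) (hprefsum : ∑ a, pref a = 1)
    (r : A → ℝ) (hr : ∀ a, r a ∈ Set.Icc (0 : ℝ) 1)
    (πstar : A → ℝ) (hstar : IsMaximizer η pref r πstar)
    (πhat : A → ℝ) (hhat0 : ∀ a, 0 < πhat a) (hhat1 : ∑ a, πhat a = 1) :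
    J η pref r πstar - J η pref r πhat =
      η⁻¹ * ∑ a, pref a *
        (πhat a / πstar a - 1 - Real.log (πhat a / πstar a)) := by
  obtain ⟨_, hs1, hs0, hmax⟩ := hstar
  set d : A → ℝ := fun a => πhat a - πstar a with hd
  have hdsum : ∑ a, d a = 0 := by simp [hd, Finset.sum_sub_distrib, hs1, hhat1]
  set f : ℝ → ℝ := fun t => J η pref r (fun a => πstar a + t * d a) with hf
  have hlin : ∀ a, HasDerivAt (fun t : ℝ => πstar a + t * d a) (d a) 0 := by
    intro a
    simpa using ((hasDerivAt_id (0 : ℝ)).mul_const (d a)).const_add (πstar a)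
  have hpos : ∀ᶠ t in nhds (0 : ℝ), ∀ a, 0 < πstar a + t * d a := by
    rw [Filter.eventually_all]
    intro a
    apply (hlin a).continuousAt.eventually_const_lt
    simpa using hs0 a
  have hloc : IsLocalMax f 0 := by
    filter_upwards [hpos] with t ht
    have h := hmax (fun a => πstar a + t * d a) (fun a => (ht a).le)
      (by rw [Finset.sum_add_distrib, ← Finset.mul_sum, hdsum, hs1]; simp) ht
    simpa [hf] using h
  have hlog : ∀ a, HasDerivAt (fun t : ℝ => Real.log (pref a / (πstar a + t * d a)))
      (-(d a / πstar a)) 0 := by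
    intro a
    have h0 : πstar a + 0 * d a ≠ 0 := by simpa using (hs0 a).ne'
    have h1 := ((hlin a).log h0).const_sub (Real.log (pref a))
    have h2 : (fun t : ℝ => Real.log (pref a / (πstar a + t * d a))) =ᶠ[nhds 0]
        (fun t : ℝ => Real.log (pref a) - Real.log (πstar a + t * d a)) := by
      filter_upwards [hpos] with t ht
      exact Real.log_div (hpref a).ne' (ht a).ne'
    have h3 := h1.congr_of_eventuallyEq h2
    simpa using h3
  have hder : HasDerivAt f (∑ a, r a * d a - η⁻¹ * ∑ a, pref a * (-(d a / πstar a))) 0 := by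
    have h1 : HasDerivAt (fun t : ℝ => ∑ a, r a * (πstar a + t * d a)) (∑ a, r a * d a) 0 :=
      HasDerivAt.fun_sum fun a _ => (hlin a).const_mul (r a)
    have h2 : HasDerivAt (fun t : ℝ => ∑ a, pref a * Real.log (pref a / (πstar a + t * d a)))
        (∑ a, pref a * (-(d a / πstar a))) 0 :=
      HasDerivAt.fun_sum fun a _ => (hlog a).const_mul (pref a)
    exact h1.sub (h2.const_mul η⁻¹)
  have hzero := hloc.hasDerivAt_eq_zero hder
  have e1 : ∑ a, r a * d a = ∑ a, r a * πhat a - ∑ a, r a * πstar a := by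
    rw [← Finset.sum_sub_distrib]
    exact Finset.sum_congr rfl fun a _ => by simp only [hd]; ring
  have e2 : ∑ a, pref a * (πhat a / πstar a - 1 - Real.log (πhat a / πstar a)) =
      -∑ a, pref a * (-(d a / πstar a)) - ∑ a, pref a * Real.log (pref a / πstar a)
        + ∑ a, pref a * Real.log (pref a / πhat a) := by
    rw [← Finset.sum_neg_distrib, ← Finset.sum_sub_distrib, ← Finset.sum_add_distrib]
    refine Finset.sum_congr rfl fun a _ => ?_
    have hp := (hpref a).ne'
    have hs := (hs0 a).ne'
    have hh := (hhat0 a).ne'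
    rw [Real.log_div hp hs, Real.log_div hp hh, Real.log_div hh hs]
    simp only [hd, sub_div, div_self hs]
    ring
  rw [e2]
  unfold J
  rw [e1] at hzero
  linear_combination -hzero
end

section
/- Let 𝒮, 𝒜 be finite sets, ρ ∈ Δ(𝒮), π^ref a full-support behavior policy, r : 𝒮 × 𝒜 → [0,1], η > 0, and β > 0. Suppose f̂ : 𝒮 × 𝒜 → ℝ satisfies |f̂(s,a) − r(s,a)| ≤ Γ(s,a) := β · D_𝒢((s,a); π^ref) for all (s,a), and let f_p = f̂ − Γ and π̂ = argmax_π ⟨f_p, π⟩ − η^{-1} KL(π^ref ‖ π). Then f_p ≤ r pointwise and SubOpt_{FKL}(π̂) ≤ 8 η C^{π*} β² D²_{π*}, where D²_{π*} = E_{(s,a)∼ρ×π*_{FKL}} D²_𝒢((s,a); π^ref). -/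
open Finset

/-- Contextual forward-KL-regularized objective
`J_FKL(π; g) = E_{s∼ρ}[⟨g(s,·), π(·|s)⟩ - η⁻¹ KL(π^ref(·|s) ‖ π(·|s))]`. -/
noncomputable def JFKL {S A : Type*} [Fintype S] [Fintype A]
    (η : ℝ) (ρ : S → ℝ) (pref g π : S → A → ℝ) : ℝ :=
  ∑ s, ρ s * ((∑ a, g s a * π s a) -
    η⁻¹ * ∑ a, pref s a * Real.log (pref s a / π s a))

/-- `π` maximizes `J_FKL(·; g)` over `Δ(A|S)` (on which the objective is `-∞` unless
the policy has full support, so it suffices to compare with full-support policies). -/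
def IsPolicyMax {S A : Type*} [Fintype S] [Fintype A]
    (η : ℝ) (ρ : S → ℝ) (pref g : S → A → ℝ) (π : S → A → ℝ) : Prop :=
  (∀ s, (∀ a, 0 < π s a) ∧ ∑ a, π s a = 1) ∧
    ∀ π' : S → A → ℝ, (∀ s, (∀ a, 0 < π' s a) ∧ ∑ a, π' s a = 1) →
      JFKL η ρ pref g π' ≤ JFKL η ρ pref g π


lemma phi_lower (w : ℝ) (hw : 1 ≤ w) : (1 - 1 / w) ^ 2 / 4 ≤ w - 1 - Real.log w := by
  obtain ⟨y, hy, rfl⟩ : ∃ y : ℝ, 1 ≤ y ∧ w = y ^ 2 :=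
    ⟨Real.sqrt w, Real.one_le_sqrt.mpr hw, (Real.sq_sqrt (by linarith)).symm⟩
  have hy0 : 0 < y := by linarith
  have h1 : Real.log (y ^ 2) = 2 * Real.log y := by
    rw [Real.log_pow]; norm_num
  have h2 := Real.log_le_sub_one_of_pos hy0
  have h3 : 1 - 1 / y ^ 2 ≤ 2 * (y - 1) := by
    have : 2 * (y - 1) - (1 - 1 / y ^ 2) = (y - 1) * (2 * y ^ 2 - y - 1) / y ^ 2 := by
      field_simp; ring
    have h4 : 0 ≤ (y - 1) * (2 * y ^ 2 - y - 1) / y ^ 2 := by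
      apply div_nonneg _ (by positivity)
      apply mul_nonneg (by linarith)
      nlinarith
    linarith
  have h5 : 0 ≤ 1 - 1 / y ^ 2 := by
    have : 1 / y ^ 2 ≤ 1 := by
      rw [div_le_one (by positivity)]; exact hw
    linarith
  have h6 : (1 - 1 / y ^ 2) ^ 2 ≤ (2 * (y - 1)) ^ 2 := pow_le_pow_left₀ h5 h3 2
  rw [h1]
  nlinarith

lemma term_bound (η C e p ph q : ℝ) (hη : 0 < η) (he : 0 ≤ e) (hp : 0 < p) (hph : 0 < ph)
    (hq : 0 < q) (hC : p / q ≤ C) :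
    e * (p - ph) - η⁻¹ * (q * (p / ph - 1 - Real.log (p / ph))) ≤ 2 * η * C * (p * e ^ 2) := by
  have hC0 : 0 < C := lt_of_lt_of_le (by positivity) hC
  have hw : 0 < p / ph := by positivity
  rcases le_total p ph with h | h
  · have h1 := Real.log_le_sub_one_of_pos hw
    have h2 : 0 ≤ η⁻¹ * (q * (p / ph - 1 - Real.log (p / ph))) :=
      mul_nonneg (by positivity) (mul_nonneg hq.le (by linarith))
    have h3 : e * (p - ph) ≤ 0 := mul_nonpos_of_nonneg_of_nonpos he (by linarith)
    have h4 : 0 ≤ 2 * η * C * (p * e ^ 2) := by positivity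
    linarith
  · have h1 := phi_lower (p / ph) ((one_le_div hph).mpr h)
    set x := 1 - 1 / (p / ph) with hx
    have hpx : p - ph = p * x := by rw [hx]; field_simp
    have h2 : η⁻¹ * (q * (x ^ 2 / 4)) ≤ η⁻¹ * (q * (p / ph - 1 - Real.log (p / ph))) := by
      gcongr
    have h3 : e * (p * x) - η⁻¹ * (q * (x ^ 2 / 4)) ≤ η * (p / q) * (p * e ^ 2) := by
      have : η * (p / q) * (p * e ^ 2) - (e * (p * x) - η⁻¹ * (q * (x ^ 2 / 4)))
          = (2 * η * p * e - q * x) ^ 2 / (4 * η * q) := by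
        field_simp; ring
      have h4 : 0 ≤ (2 * η * p * e - q * x) ^ 2 / (4 * η * q) := by positivity
      linarith
    have h5 : η * (p / q) * (p * e ^ 2) ≤ η * C * (p * e ^ 2) := by gcongr
    have h6 : 0 ≤ η * C * (p * e ^ 2) := by positivity
    rw [hpx]
    linarith

lemma first_order {S A : Type*} [Fintype S] [Fintype A]
    (η : ℝ) (ρ : S → ℝ) (pref g p p' : S → A → ℝ) (hpref : ∀ s a, 0 < pref s a)
    (hp : IsPolicyMax η ρ pref g p) (hp' : ∀ s, ∑ a, p' s a = 1) :
    ∑ s, ρ s * ((∑ a, g s a * (p' s a - p s a)) +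
      η⁻¹ * ∑ a, pref s a * (p' s a / p s a - 1)) = 0 := by
  obtain ⟨hpp, hmax⟩ := hp
  let F : ℝ → ℝ := fun t => JFKL η ρ pref g (fun s a => p s a + t * (p' s a - p s a))
  have hloc : IsLocalMax F 0 := by
    have hev : ∀ᶠ t : ℝ in nhds 0, ∀ s a, 0 < p s a + t * (p' s a - p s a) := by
      rw [Filter.eventually_all]; intro s
      rw [Filter.eventually_all]; intro a
      have hc : Continuous fun t : ℝ => p s a + t * (p' s a - p s a) := by fun_prop
      exact hc.continuousAt.eventually_const_lt (by simpa using (hpp s).1 a)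
    filter_upwards [hev] with t ht
    have := hmax (fun s a => p s a + t * (p' s a - p s a)) (fun s => ⟨ht s, by
      rw [Finset.sum_add_distrib, ← Finset.mul_sum, Finset.sum_sub_distrib, hp' s, (hpp s).2]
      ring⟩)
    simpa [F] using this
  have hder : HasDerivAt F (∑ s, ρ s * ((∑ a, g s a * (p' s a - p s a)) -
      η⁻¹ * ∑ a, pref s a * (-(p' s a / p s a - 1)))) 0 := by
    unfold F JFKL
    apply HasDerivAt.fun_sum; intro s _
    apply HasDerivAt.const_mul
    have hlin : ∀ a, HasDerivAt (fun t : ℝ => p s a + t * (p' s a - p s a))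
        (p' s a - p s a) 0 := fun a => by
      simpa using ((hasDerivAt_id (0:ℝ)).mul_const (p' s a - p s a)).const_add (p s a)
    apply HasDerivAt.sub
    · apply HasDerivAt.fun_sum; intro a _
      exact (hlin a).const_mul _
    · apply HasDerivAt.const_mul
      apply HasDerivAt.fun_sum; intro a _
      apply HasDerivAt.const_mul
      have h0 := (hpp s).1 a
      have hq := hpref s a
      have h1 := ((hasDerivAt_const (0:ℝ) (pref s a)).fun_div (hlin a)
        (by simpa using h0.ne')).log (by simp [h0.ne', hq.ne'])
      refine h1.congr_deriv ?_
      simp only [zero_mul, add_zero, zero_sub]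
      field_simp
  have := hloc.hasDerivAt_eq_zero hder
  rw [← this]
  refine Finset.sum_congr rfl fun s _ => ?_
  simp only [mul_neg, Finset.sum_neg_distrib]
  ring

/-- Deterministic analysis of `FKL-PCB` with function approximation:
if `|f̂ - r| ≤ Γ := β D_𝒢(·; π^ref)` pointwise (where `D²_𝒢` is the `D²`-divergence of
the class `𝒢 ∋ r, f̂` with respect to `ρ × π^ref`) and `π̂` maximizes the pessimistic
forward-KL-regularized objective with reward `f_p = f̂ - Γ`, then `f_p ≤ r` pointwise
and `SubOpt_FKL(π̂) ≤ 8 η C^{π*} β² D²_{π*}`, where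
`D²_{π*} = E_{(s,a)∼ρ×π*}[D²_𝒢((s,a); π^ref)]` and
`C^{π*} = sup_{s,a} π*(a|s)/π^ref(a|s)`. -/
theorem stmt9 {S A : Type*} [Fintype S] [Fintype A] [Nonempty S] [Nonempty A]
    (η β : ℝ) (hη : 0 < η) (hβ : 0 < β)
    (ρ : S → ℝ) (hρ0 : ∀ s, 0 ≤ ρ s) (hρ1 : ∑ s, ρ s = 1)
    (pref : S → A → ℝ) (hpref : ∀ s a, 0 < pref s a) (hpref1 : ∀ s, ∑ a, pref s a = 1)
    (G : Set (S → A → ℝ))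
    (r : S → A → ℝ) (hr01 : ∀ s a, r s a ∈ Set.Icc (0 : ℝ) 1) (hrG : r ∈ G)
    (fhat : S → A → ℝ) (hfG : fhat ∈ G)
    (D2 : S → A → ℝ)
    (hD2 : ∀ s a, IsLUB
      {x : ℝ | ∃ g ∈ G, ∃ h ∈ G,
        x = (g s a - h s a) ^ 2 /
          ∑ s', ρ s' * ∑ a', pref s' a' * (g s' a' - h s' a') ^ 2} (D2 s a))
    (herr : ∀ s a, |fhat s a - r s a| ≤ β * Real.sqrt (D2 s a))
    (πstar : S → A → ℝ) (hstar : IsPolicyMax η ρ pref r πstar)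
    (πhat : S → A → ℝ)
    (hhat : IsPolicyMax η ρ pref
      (fun s a => fhat s a - β * Real.sqrt (D2 s a)) πhat) :
    (∀ s a, fhat s a - β * Real.sqrt (D2 s a) ≤ r s a) ∧
    JFKL η ρ pref r πstar - JFKL η ρ pref r πhat ≤
      8 * η * (⨆ p : S × A, πstar p.1 p.2 / pref p.1 p.2) * β ^ 2 *
        ∑ s, ρ s * ∑ a, πstar s a * D2 s a := by
  have hD0 : ∀ s a, 0 ≤ D2 s a := fun s a => (hD2 s a).1 ⟨r, hrG, r, hrG, by simp⟩
  have hfp : ∀ s a, fhat s a - β * Real.sqrt (D2 s a) ≤ r s a := fun s a => by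
    have := (abs_le.mp (herr s a)).2
    linarith
  refine ⟨hfp, ?_⟩
  have hfo := first_order η ρ pref _ πhat πstar hpref hhat (fun s => (hstar.1 s).2)
  set C := ⨆ p : S × A, πstar p.1 p.2 / pref p.1 p.2 with hCdef
  have hC : ∀ s a, πstar s a / pref s a ≤ C := fun s a =>
    le_ciSup (f := fun p : S × A => πstar p.1 p.2 / pref p.1 p.2)
      (Set.finite_range _).bddAbove (s, a)
  have key : JFKL η ρ pref r πstar - JFKL η ρ pref r πhat =
      ∑ s, ρ s * ∑ a, ((r s a - (fhat s a - β * Real.sqrt (D2 s a))) * (πstar s a - πhat s a)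
        - η⁻¹ * (pref s a * (πstar s a / πhat s a - 1 - Real.log (πstar s a / πhat s a)))) := by
    rw [← sub_zero (JFKL η ρ pref r πstar - JFKL η ρ pref r πhat), ← hfo]
    unfold JFKL
    rw [← Finset.sum_sub_distrib, ← Finset.sum_sub_distrib]
    refine Finset.sum_congr rfl fun s _ => ?_
    rw [← mul_sub, ← mul_sub]
    congr 1
    simp only [Finset.mul_sum]
    simp only [← Finset.sum_sub_distrib, ← Finset.sum_add_distrib]
    refine Finset.sum_congr rfl fun a _ => ?_
    have h1 := (hstar.1 s).1 a
    have h2 := (hhat.1 s).1 a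
    have h3 := hpref s a
    rw [Real.log_div h3.ne' h1.ne', Real.log_div h3.ne' h2.ne', Real.log_div h1.ne' h2.ne']
    ring
  rw [key, Finset.mul_sum]
  refine Finset.sum_le_sum fun s _ => ?_
  rw [mul_left_comm]
  refine mul_le_mul_of_nonneg_left ?_ (hρ0 s)
  rw [Finset.mul_sum]
  refine Finset.sum_le_sum fun a _ => ?_
  have h1 := (hstar.1 s).1 a
  have h2 := (hhat.1 s).1 a
  have h3 := hpref s a
  have hC0 : 0 < C := lt_of_lt_of_le (by positivity) (hC s a)
  refine (term_bound η C _ _ _ _ hη (sub_nonneg.mpr (hfp s a)) h1 h2 h3 (hC s a)).trans ?_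
  have h4 : (r s a - (fhat s a - β * Real.sqrt (D2 s a))) ^ 2 ≤ 4 * (β ^ 2 * D2 s a) := by
    have h5 : r s a - (fhat s a - β * Real.sqrt (D2 s a)) ≤ 2 * (β * Real.sqrt (D2 s a)) := by
      have := (abs_le.mp (herr s a)).1
      linarith
    have h6 := pow_le_pow_left₀ (sub_nonneg.mpr (hfp s a)) h5 2
    have h7 := Real.sq_sqrt (hD0 s a)
    calc _ ≤ _ := h6
      _ = 4 * (β ^ 2 * Real.sqrt (D2 s a) ^ 2) := by ring
      _ = _ := by rw [h7]
  calc _ ≤ 2 * η * C * (πstar s a * (4 * (β ^ 2 * D2 s a))) := by gcongr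
    _ = _ := by ring
end

section
/- For every integer A ≥ 1, every C > 1, and every η ≥ 2, the following linear bandit instance with d = 2A+1 arms satisfies C^{π*} ≤ 4C and D²_{π*} ≥ C·A. The instance: arms a_1, …, a_{2A+1} with feature vectors φ(a_i) = e_i ∈ ℝ^{2A+1}; reference policy π^ref(a_i) = 1/(2AC) for i ≤ 2A and π^ref(a_{2A+1}) = (C−1)/C; true parameter θ* = Σ_{i ≤ A} e_i (so the reward of arm a_i is ⟨θ*, e_i⟩); function class 𝒢 = { a ↦ ⟨θ, φ(a)⟩ : ‖θ‖_∞ ≤ 1 }. -/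
open Finset

lemma kkt_aux {ι : Type*} [Fintype ι] [DecidableEq ι] (η : ℝ) (pref g p : ι → ℝ)
    (hpref : ∀ a, 0 < pref a) (h : IsMaximizer η pref g p) (i j : ι) :
    g i + η⁻¹ * (pref i / p i) = g j + η⁻¹ * (pref j / p j) := by
  obtain ⟨-, hsum, hpos, hmax⟩ := h
  let v : ι → ℝ := fun a => (Pi.single i (1:ℝ) : ι → ℝ) a - (Pi.single j (1:ℝ) : ι → ℝ) a
  have hv : ∑ a, v a = 0 := by simp [v]
  have hlin : ∀ a, HasDerivAt (fun t : ℝ => p a + t * v a) (v a) 0 := fun a => by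
    simpa using ((hasDerivAt_id (0:ℝ)).mul_const (v a)).const_add (p a)
  have hlog : ∀ a, HasDerivAt (fun t : ℝ => Real.log (pref a / (p a + t * v a)))
      (-(v a / p a)) 0 := fun a => by
    have hp := (hpos a).ne'
    have hr := (hpref a).ne'
    have h1 := ((hasDerivAt_const (0:ℝ) (pref a)).div (hlin a) (by simpa using hp)).log
      (by simpa using ⟨hr, hp⟩)
    simp only [Pi.div_apply, zero_mul, add_zero, zero_sub] at h1
    have e : -(v a / p a) = -(pref a * v a) / p a ^ 2 / (pref a / p a) := by
      field_simp
    rw [e]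
    exact h1
  have hd : HasDerivAt (fun t : ℝ => J η pref g (fun a => p a + t * v a))
      (∑ a, g a * v a - η⁻¹ * ∑ a, pref a * (-(v a / p a))) 0 := by
    unfold J
    refine HasDerivAt.sub ?_ (HasDerivAt.const_mul _ ?_)
    · exact HasDerivAt.fun_sum fun a _ => (hlin a).const_mul _
    · exact HasDerivAt.fun_sum fun a _ => (hlog a).const_mul _
  have hloc : IsLocalMax (fun t : ℝ => J η pref g (fun a => p a + t * v a)) 0 := by
    have hev : ∀ᶠ t : ℝ in nhds 0, ∀ a, 0 < p a + t * v a := by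
      rw [Filter.eventually_all]
      intro a
      exact (hlin a).continuousAt.eventually_const_lt (by simpa using hpos a)
    filter_upwards [hev] with t ht
    have := hmax (fun a => p a + t * v a) (fun a => (ht a).le)
      (by rw [Finset.sum_add_distrib, ← Finset.mul_sum, hv, hsum]; simp) ht
    simpa using this
  have h0 := hloc.hasDerivAt_eq_zero hd
  have e1 : ∑ a, g a * v a = g i - g j := by
    simp [v, mul_sub, Finset.sum_sub_distrib, Pi.single_apply]
  have e2 : ∑ a, pref a * (-(v a / p a)) = -(pref i / p i - pref j / p j) := by
    have : ∀ a, pref a * (-(v a / p a)) = -((pref a / p a) * v a) := fun a => by ring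
    simp only [this, Finset.sum_neg_distrib]
    simp [v, mul_sub, Finset.sum_sub_distrib, Pi.single_apply]
  rw [e1, e2] at h0
  linarith

/-- A `(2A+1)`-armed linear bandit instance with standard-basis
features, reference policy `π^ref(aᵢ) = 1/(2AC)` for `i < 2A` and
`π^ref(a_{2A+1}) = (C-1)/C`, true parameter `θ* = ∑_{i<A} eᵢ` (so `r(aᵢ) = 1` for
`i < A` and `0` otherwise), and function class `{a ↦ ⟨θ, φ(a)⟩ : ‖θ‖_∞ ≤ 1}`,
for which `C^{π*} ≤ 4C` while `D²_{π*} ≥ C·A`. -/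
theorem stmt12 (A : ℕ) (hA : 1 ≤ A) (C η : ℝ) (hC : 1 < C) (hη : 2 ≤ η)
    (πref : Fin (2 * A + 1) → ℝ)
    (hπref : ∀ i, πref i = if (i : ℕ) < 2 * A then 1 / (2 * A * C) else (C - 1) / C)
    (r : Fin (2 * A + 1) → ℝ)
    (hr : ∀ i, r i = if (i : ℕ) < A then 1 else 0)
    (πstar : Fin (2 * A + 1) → ℝ) (hstar : IsMaximizer η πref r πstar)
    (D2 : Fin (2 * A + 1) → ℝ)
    (hD2 : ∀ i, IsLUB
      {x : ℝ | ∃ θ θ' : Fin (2 * A + 1) → ℝ,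
        (∀ j, |θ j| ≤ 1) ∧ (∀ j, |θ' j| ≤ 1) ∧
        x = (θ i - θ' i) ^ 2 / ∑ j, πref j * (θ j - θ' j) ^ 2} (D2 i)) :
    (∀ i, πstar i ≤ 4 * C * πref i) ∧ C * A ≤ ∑ i, πstar i * D2 i := by
  have hA' : (1:ℝ) ≤ A := by exact_mod_cast hA
  have hA0 : (0:ℝ) < A := by linarith
  have hC0 : 0 < C := by linarith
  have hη0 : 0 < η := by linarith
  have hrefpos : ∀ i, 0 < πref i := by
    intro i
    rw [hπref]
    split_ifs
    · positivity
    · exact div_pos (by linarith) hC0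
  have hrefsum : ∑ i, πref i = 1 := by
    rw [Fin.sum_univ_castSucc]
    simp [hπref]
    field_simp
    ring
  have kkt := kkt_aux η πref r πstar hrefpos hstar
  obtain ⟨-, hsum, hpos, -⟩ := hstar
  let i0 : Fin (2 * A + 1) := ⟨0, by omega⟩
  have hi0 : r i0 = 1 := by rw [hr, if_pos (show (0:ℕ) < A by omega)]
  have hlow : ∀ j : Fin (2 * A + 1), ¬ (j : ℕ) < A → πstar j ≤ πref j / 2 := by
    intro j hj
    have h := kkt i0 j
    rw [hi0, hr j, if_neg hj] at h
    have h1 : 0 < η⁻¹ * (πref i0 / πstar i0) :=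
      mul_pos (inv_pos.2 hη0) (div_pos (hrefpos _) (hpos _))
    have h2 : 1 < η⁻¹ * (πref j / πstar j) := by linarith
    rw [inv_mul_eq_div, lt_div_iff₀ hη0, lt_div_iff₀ (hpos j)] at h2
    nlinarith [hpos j]
  have htopref : ∀ j : Fin (2 * A + 1), (j : ℕ) < A → πref j = 1 / (2 * A * C) := by
    intro j hj
    rw [hπref, if_pos (by omega)]
  have hD : ∀ i, 1 / πref i ≤ D2 i := by
    intro i
    refine (hD2 i).1 ⟨Pi.single i 1, 0, ?_, ?_, ?_⟩
    · intro j
      by_cases h : j = i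
      · subst h; simp
      · simp [h]
    · simp
    · simp [Pi.single_apply]
  constructor
  · intro i
    by_cases hi : (i : ℕ) < A
    · have heq : ∀ j : Fin (2 * A + 1), (j : ℕ) < A → πstar j = πstar i := by
        intro j hj
        have h := kkt i j
        rw [hr i, hr j, if_pos hi, if_pos hj, htopref i hi, htopref j hj] at h
        have h2 := mul_left_cancel₀ (inv_pos.2 hη0).ne' (add_left_cancel h)
        have hc : (1 / (2 * A * C) : ℝ) ≠ 0 := by positivity
        have p1 := (hpos i).ne'
        have p2 := (hpos j).ne'
        rw [div_eq_div_iff p1 p2] at h2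
        exact mul_left_cancel₀ hc h2
      have hs : ∑ k : Fin A, πstar (Fin.castLE (by omega) k) ≤ ∑ j, πstar j := by
        refine (Finset.sum_map Finset.univ
          (Fin.castLEEmb (by omega : A ≤ 2 * A + 1)) πstar).symm.le.trans ?_
        exact Finset.sum_le_sum_of_subset_of_nonneg (Finset.subset_univ _)
          fun j _ _ => (hpos j).le
      rw [hsum, Finset.sum_congr rfl fun k _ => heq _ (by simp)] at hs
      simp at hs
      rw [htopref i hi]
      have : 4 * C * (1 / (2 * A * C)) = 2 / (A:ℝ) := by field_simp; norm_num
      rw [this, le_div_iff₀ hA0]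
      linarith
    · have := hlow i hi
      nlinarith [hrefpos i]
  · have hterm : ∀ i, 2 * A * C * (πstar i - πref i / 2) ≤ πstar i * D2 i := by
      intro i
      have hq := hD i
      have hq0 : 0 < 1 / πref i := one_div_pos.2 (hrefpos i)
      have hac : (0:ℝ) < 2 * A * C := by positivity
      by_cases hi : (i : ℕ) < A
      · rw [htopref i hi, one_div_one_div] at hq
        have := mul_le_mul_of_nonneg_left hq (hpos i).le
        have h3 := mul_pos hac (hrefpos i)
        linarith
      · have h1 := mul_nonneg (hpos i).le (hq0.le.trans hq)
        have h2 := hlow i hi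
        have := mul_nonneg hac.le (sub_nonneg.2 h2)
        linarith
    have := Finset.sum_le_sum fun i (_ : i ∈ Finset.univ) => hterm i
    rw [← Finset.mul_sum, Finset.sum_sub_distrib, ← Finset.sum_div, hsum, hrefsum] at this
    linarith
end

section
/- For every C ≥ 2 and every η ≥ 2, the following three-armed linear bandit instance satisfies C^{π*} ≥ C/2 and D²_{π*} ≤ 16. The instance: arms a_1, a_2, a_3 with feature vectors φ(a_1) = (1,0), φ(a_2) = (0,1), φ(a_3) = (1,1) in ℝ²; reference policy π^ref(a_1) = π^ref(a_2) = 1/2 − 1/(2C) and π^ref(a_3) = 1/C; true parameter θ* = (1,1); function class 𝒢 = { a ↦ ⟨θ, φ(a)⟩ : ‖θ‖₂ ≤ √2 }. -/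
open Finset

/-- A three-armed linear bandit instance with features
`φ(a₁) = (1,0)`, `φ(a₂) = (0,1)`, `φ(a₃) = (1,1)`, reference policy
`π^ref(a₁) = π^ref(a₂) = 1/2 - 1/(2C)`, `π^ref(a₃) = 1/C`, true parameter
`θ* = (1,1)`, and function class `{a ↦ ⟨θ, φ(a)⟩ : ‖θ‖₂ ≤ √2}`, for which
`C^{π*} ≥ C/2` while `D²_{π*} ≤ 16`. -/
theorem stmt13 (C η : ℝ) (hC : 2 ≤ C) (hη : 2 ≤ η)
    (φ : Fin 3 → Fin 2 → ℝ) (hφ : φ = ![![1, 0], ![0, 1], ![1, 1]])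
    (πref : Fin 3 → ℝ)
    (hπref : πref = ![1 / 2 - 1 / (2 * C), 1 / 2 - 1 / (2 * C), 1 / C])
    (θstar : Fin 2 → ℝ) (hθ : θstar = ![1, 1])
    (r : Fin 3 → ℝ) (hr : ∀ i, r i = ∑ k, θstar k * φ i k)
    (πstar : Fin 3 → ℝ) (hstar : IsMaximizer η πref r πstar)
    (D2 : Fin 3 → ℝ)
    (hD2 : ∀ i, IsLUB
      {x : ℝ | ∃ θ θ' : Fin 2 → ℝ,
        (∑ k, (θ k) ^ 2 ≤ 2) ∧ (∑ k, (θ' k) ^ 2 ≤ 2) ∧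
        x = (∑ k, (θ k - θ' k) * φ i k) ^ 2 /
          ∑ j, πref j * (∑ k, (θ k - θ' k) * φ j k) ^ 2} (D2 i)) :
    (∃ i, C / 2 ≤ πstar i / πref i) ∧ ∑ i, πstar i * D2 i ≤ 16 := by
  have hC0 : 0 < C := by linarith
  have hη0 : 0 < η := by linarith
  obtain ⟨p, hp⟩ : ∃ p, p = 1 / 2 - 1 / (2 * C) := ⟨_, rfl⟩
  obtain ⟨c, hc⟩ : ∃ c, c = 1 / C := ⟨_, rfl⟩
  have hc0 : 0 < c := by rw [hc]; positivity
  have hpc : 2 * p + c = 1 := by rw [hp, hc]; field_simp; ring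
  have hc2 : c ≤ 1 / 2 := by rw [hc]; exact one_div_le_one_div_of_le (by norm_num) hC
  have hp4 : 1 / 4 ≤ p := by linarith
  rw [← hp, ← hc] at hπref
  have hr0 : r 0 = 1 := by rw [hr]; simp [hθ, hφ, Fin.sum_univ_two]
  have hr1 : r 1 = 1 := by rw [hr]; simp [hθ, hφ, Fin.sum_univ_two]
  have hr2 : r 2 = 2 := by rw [hr]; simp [hθ, hφ, Fin.sum_univ_two]; norm_num
  obtain ⟨-, hsum, hpos, hmax⟩ := hstar
  rw [Fin.sum_univ_three] at hsum
  have h0 := hpos 0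
  have h1 := hpos 1
  have h2 := hpos 2
  constructor
  · refine ⟨2, ?_⟩
    have hs : 1 / 2 ≤ πstar 2 := by
      by_contra! hlt
      obtain ⟨b, hb⟩ : ∃ b, b = πstar 0 + πstar 1 := ⟨_, rfl⟩
      have hb2 : 1 / 2 < b := by linarith
      have hb0 : 0 < 2 * b := by linarith
      have hq0 : 0 < πstar 0 / (2 * b) := by positivity
      have hq1 : 0 < πstar 1 / (2 * b) := by positivity
      have hqs : πstar 0 / (2 * b) + πstar 1 / (2 * b) = 1 / 2 := by
        rw [← add_div, ← hb]; field_simp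
      have key := hmax ![πstar 0 / (2 * b), πstar 1 / (2 * b), 1 / 2]
        (by intro a; fin_cases a <;> simp <;> positivity)
        (by rw [Fin.sum_univ_three]; simp; linarith)
        (by intro a; fin_cases a <;> simp <;> positivity)
      have hl : ∀ x : ℝ, 0 < x →
          Real.log (p / (x / (2 * b))) = Real.log (p / x) + Real.log (2 * b) := by
        intro x hx
        have hpp : p ≠ 0 := by linarith
        rw [← Real.log_mul (by positivity) (by positivity)]
        congr 1; field_simp
      have hl2 : Real.log (c / (1 / 2)) ≤ Real.log (c / πstar 2) := by
        apply Real.log_le_log (by positivity)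
        exact div_le_div_of_nonneg_left hc0.le h2 hlt.le
      have hl3 := Real.log_le_sub_one_of_pos hb0
      unfold J at key
      simp only [Fin.sum_univ_three, hπref, hr0, hr1, hr2, Matrix.cons_val_zero,
        Matrix.cons_val_one, Matrix.cons_val] at key
      rw [hl _ h0, hl _ h1] at key
      have hi : η⁻¹ ≤ 1 / 2 := by
        rw [inv_eq_one_div]; exact one_div_le_one_div_of_le (by norm_num) hη
      have hi0 : 0 < η⁻¹ := by positivity
      have e1 : c * Real.log (c / (1 / 2)) ≤ c * Real.log (c / πstar 2) :=
        mul_le_mul_of_nonneg_left hl2 hc0.le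
      have e2 : 2 * p * Real.log (2 * b) ≤ 2 * p * (2 * b - 1) :=
        mul_le_mul_of_nonneg_left hl3 (by linarith)
      have e3 := mul_le_mul_of_nonneg_left (add_le_add e1 e2) hi0.le
      have hpb : 0 < 2 * p * (2 * b - 1) := mul_pos (by linarith) (by linarith)
      have e4 : η⁻¹ * (2 * p * (2 * b - 1)) ≤ 1 / 2 * (2 * p * (2 * b - 1)) :=
        mul_le_mul_of_nonneg_right hi hpb.le
      have e5 : 0 < c * (2 * b - 1) := mul_pos hc0 (by linarith)
      have e6 : p = (1 - c) / 2 := by linarith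
      have e7 : 1 / 2 * (2 * p * (2 * b - 1)) = (b - 1 / 2) - c * (2 * b - 1) / 2 := by
        rw [e6]; ring
      have e8 : πstar 2 = 1 - b := by linarith
      nlinarith
    have : πref 2 = c := by simp [hπref]
    rw [this, hc, div_div_eq_mul_div, div_one]
    nlinarith
  · have hD : ∀ i, D2 i ≤ 8 := by
      intro i
      apply (hD2 i).2
      rintro x ⟨θ, θ', -, -, rfl⟩
      apply div_le_of_le_mul₀
      · refine Finset.sum_nonneg fun j _ => mul_nonneg ?_ (sq_nonneg _)
        fin_cases j <;> simp [hπref] <;> linarith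
      · norm_num
      · generalize hu : θ 0 - θ' 0 = u
        generalize hv : θ 1 - θ' 1 = v
        have a1 : u ^ 2 ≤ 4 * (p * u ^ 2) := by nlinarith [sq_nonneg u]
        have a2 : v ^ 2 ≤ 4 * (p * v ^ 2) := by nlinarith [sq_nonneg v]
        have a3 : 0 ≤ c * (u + v) ^ 2 := by positivity
        have a4 := sq_nonneg (u - v)
        fin_cases i <;> simp [hπref, hφ, Fin.sum_univ_three, Fin.sum_univ_two, hu, hv] <;>
          nlinarith [sq_nonneg u, sq_nonneg v]
    rw [Fin.sum_univ_three]
    nlinarith [mul_le_mul_of_nonneg_left (hD 0) h0.le, mul_le_mul_of_nonneg_left (hD 1) h1.le,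
      mul_le_mul_of_nonneg_left (hD 2) h2.le]
end

section
/- Under the stated hypotheses on h, for all r, r' ∈ ℝ^𝒜 the Bregman divergences of h* and of h satisfy the exact identity D_{h*}(r, r') = D_h(π_{r'}, π_r), where D_f(x, y) = f(x) − f(y) − ⟨∇f(y), x − y⟩; here ∇h*(r') = π_{r'} and ∇h(π_r) is the gradient of (any continuously differentiable extension of) h at π_r, whose pairing with differences of probability vectors is well defined. -/
open Finset

/-- The relative interior of the probability simplex on a finite set `A`:
the full-support distributions. -/
def riSimplex (A : Type*) [Fintype A] : Set (A → ℝ) :=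
  {p | (∀ a, 0 < p a) ∧ ∑ a, p a = 1}

/-- Under the stated hypotheses on `h`, writing
`h*(r) = ⟨r, π_r⟩ - h(π_r)` for the constrained conjugate (so `∇h*(r') = π_{r'}`), the
Bregman divergences of `h*` and of `h` satisfy the exact identity
`D_{h*}(r, r') = D_h(π_{r'}, π_r)`; here `∇h(π_r)` is the gradient of (any continuously
differentiable extension of) `h` at `π_r`, whose pairing with differences of
probability vectors is well defined. -/
theorem stmt15 {A : Type*} [Fintype A] [Nonempty A]
    (h : (A → ℝ) → EReal)
    -- `h` is proper (never `-∞`) and finite on the relative interior of the simplex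
    (hbot : ∀ p, h p ≠ ⊥)
    (hfin : ∀ p ∈ riSimplex A, h p ≠ ⊤)
    -- `h` is convex on the simplex
    (hconv : ∀ p ∈ stdSimplex ℝ A, ∀ q ∈ stdSimplex ℝ A, ∀ t : ℝ, 0 < t → t < 1 →
      h (fun a => t * p a + (1 - t) * q a) ≤
        ((t : ℝ) : EReal) * h p + (((1 - t) : ℝ) : EReal) * h q)
    -- `h` is strictly convex on the relative interior of the simplex
    (hstrict : ∀ p ∈ riSimplex A, ∀ q ∈ riSimplex A, p ≠ q → ∀ t : ℝ, 0 < t → t < 1 →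
      h (fun a => t * p a + (1 - t) * q a) <
        ((t : ℝ) : EReal) * h p + (((1 - t) : ℝ) : EReal) * h q)
    -- `h` is closed (lower semicontinuous)
    (hclosed : LowerSemicontinuous h)
    -- `h` is continuously differentiable on the relative interior of the simplex
    (grad : (A → ℝ) → ((A → ℝ) →L[ℝ] ℝ))
    (hgradcont : ContinuousOn grad (riSimplex A))
    (hgrad : ∀ p ∈ riSimplex A,
      HasFDerivWithinAt (fun q => (h q).toReal) (grad p) (riSimplex A) p)
    -- for every `r`, the maximizer `π_r` of `⟨r, π⟩ - h(π)` over the simplex exists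
    -- and lies in the relative interior (it is then unique by strict convexity)
    (πr : (A → ℝ) → A → ℝ)
    (hπr : ∀ r, πr r ∈ riSimplex A)
    (hmax : ∀ r : A → ℝ, ∀ q ∈ stdSimplex ℝ A,
      ((∑ a, r a * q a : ℝ) : EReal) - h q ≤
        ((∑ a, r a * πr r a : ℝ) : EReal) - h (πr r))
    :
    ∀ r r' : A → ℝ,
      (∑ a, r a * πr r a - (h (πr r)).toReal) -
        (∑ a, r' a * πr r' a - (h (πr r')).toReal) -
        (∑ a, πr r' a * (r a - r' a)) =
      (h (πr r')).toReal - (h (πr r)).toReal -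
        grad (πr r) (fun a => πr r' a - πr r a) := by
  intro r r'
  have key : grad (πr r) (fun a => πr r' a - πr r a)
      = ∑ a, r a * (πr r' a - πr r a) := by
    have hp := hπr r
    have hp' := hπr r'
    have hm := hmax r
    have hg := hgrad _ hp
    generalize πr r = p at *
    generalize πr r' = p' at *
    set d : A → ℝ := fun a => p' a - p a with hd
    have hdsum : ∑ a, d a = 0 := by
      simp only [hd, Finset.sum_sub_distrib, hp.2, hp'.2, sub_self]
    let γ : ℝ → A → ℝ := fun t => p + t • d
    have hγ0 : γ 0 = p := by simp [γ]
    have hγ : HasDerivAt γ d 0 := by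
      have := ((hasDerivAt_id (0 : ℝ)).smul_const d).const_add p
      simpa [γ] using this
    have hmem : ∀ᶠ t in nhds (0 : ℝ), γ t ∈ riSimplex A := by
      have h1 : ∀ a, ∀ᶠ t in nhds (0 : ℝ), 0 < γ t a := by
        intro a
        have hc : ContinuousAt (fun t => γ t a) 0 := by
          simp only [γ, Pi.add_apply, Pi.smul_apply, smul_eq_mul]
          fun_prop
        have h0 : 0 < γ 0 a := by rw [hγ0]; exact hp.1 a
        exact hc.eventually (lt_mem_nhds h0)
      filter_upwards [Filter.eventually_all.2 h1] with t ht
      refine ⟨ht, ?_⟩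
      simp only [γ, Pi.add_apply, Pi.smul_apply, smul_eq_mul, Finset.sum_add_distrib,
        ← Finset.mul_sum, hdsum, hp.2, mul_zero, add_zero]
    have hder : HasDerivAt (fun t => (h (γ t)).toReal) (grad p d) 0 := by
      have h2 : HasFDerivWithinAt (fun q => (h q).toReal) (grad p) (riSimplex A) (γ 0) := by
        rw [hγ0]; exact hg
      have h3 := h2.comp_hasDerivWithinAt (s := γ ⁻¹' riSimplex A) (0 : ℝ)
        hγ.hasDerivWithinAt (fun t ht => ht)
      exact h3.hasDerivAt hmem
    have hlin : HasDerivAt (fun t => ∑ a, r a * γ t a) (∑ a, r a * d a) 0 := by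
      refine HasDerivAt.fun_sum fun a _ => ?_
      exact ((hasDerivAt_pi.1 hγ) a).const_mul (r a)
    have hloc : IsLocalMax (fun t => (∑ a, r a * γ t a) - (h (γ t)).toReal) 0 := by
      filter_upwards [hmem] with t ht
      have h4 := hm (γ t) ⟨fun a => (ht.1 a).le, ht.2⟩
      rw [← EReal.coe_toReal (hfin _ ht) (hbot _), ← EReal.coe_toReal (hfin _ hp) (hbot _),
        ← EReal.coe_sub, ← EReal.coe_sub, EReal.coe_le_coe_iff] at h4
      simpa only [hγ0] using h4
    have := hloc.hasDerivAt_eq_zero (hlin.sub hder)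
    linarith
  rw [key]
  simp only [mul_sub, Finset.sum_sub_distrib]
  have e1 : ∑ a, πr r' a * r a = ∑ a, r a * πr r' a :=
    Finset.sum_congr rfl fun a _ => mul_comm _ _
  have e2 : ∑ a, πr r' a * r' a = ∑ a, r' a * πr r' a :=
    Finset.sum_congr rfl fun a _ => mul_comm _ _
  rw [e1, e2]
  ring
end

section
/- Fix an even integer A = 2K ≥ 2, η > 0, c ∈ (0, 0.25), and signs v_0, …, v_{K−1} ∈ {±1}. Consider the A-armed bandit with uniform reference distribution π^ref = Unif(𝒜) on 𝒜 = {0, 1, …, A−1} and reward function r(2k) = 0.5 − v_k c, r(2k+1) = 0.5 + v_k c for k = 0, …, K−1. Then the unique maximizer π* of the forward-KL-regularized objective is given in closed form by π*(a) = (1 − κ_a ω)/A, where κ_{2k} = v_k, κ_{2k+1} = −v_k, and ω = 2ηc / (1 + √(1 + 4η²c²)). Equivalently, the normalization constant λ from the closed-form characterization satisfies λ − 0.5 = (1 + √(1 + 4η²c²)) / (2η), the same value for every choice of the signs. -/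
open Finset

/-- Termwise inequality behind optimality. -/
theorem term_le (η w g p q l : ℝ) (hη : 0 < η) (hw : 0 < w) (hp : 0 < p) (hq : 0 < q)
    (h : η⁻¹ * w = p * (l - g)) :
    g * q - η⁻¹ * (w * Real.log (w / q)) ≤
      g * p - η⁻¹ * (w * Real.log (w / p)) + l * (q - p) := by
  have h1 := Real.log_le_sub_one_of_pos (div_pos hq hp)
  rw [Real.log_div hq.ne' hp.ne'] at h1
  rw [Real.log_div hw.ne' hq.ne', Real.log_div hw.ne' hp.ne']
  have h0 : 0 < η⁻¹ * w := by positivity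
  have h2 := mul_le_mul_of_nonneg_left h1 h0.le
  have h3 : η⁻¹ * w * (q / p - 1) = (l - g) * (q - p) := by
    rw [h]; field_simp
  nlinarith

theorem term_lt (η w g p q l : ℝ) (hη : 0 < η) (hw : 0 < w) (hp : 0 < p) (hq : 0 < q)
    (h : η⁻¹ * w = p * (l - g)) (hne : q ≠ p) :
    g * q - η⁻¹ * (w * Real.log (w / q)) <
      g * p - η⁻¹ * (w * Real.log (w / p)) + l * (q - p) := by
  have h1 := Real.log_lt_sub_one_of_pos (div_pos hq hp)
    (fun hh => hne ((div_eq_one_iff_eq hp.ne').1 hh))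
  rw [Real.log_div hq.ne' hp.ne'] at h1
  rw [Real.log_div hw.ne' hq.ne', Real.log_div hw.ne' hp.ne']
  have h0 : 0 < η⁻¹ * w := by positivity
  have h2 := mul_lt_mul_of_pos_left h1 h0
  have h3 : η⁻¹ * w * (q / p - 1) = (l - g) * (q - p) := by
    rw [h]; field_simp
  nlinarith

theorem J_eq_sum {A : Type*} [Fintype A] (η : ℝ) (w g p : A → ℝ) :
    J η w g p = ∑ a, (g a * p a - η⁻¹ * (w a * Real.log (w a / p a))) := by
  rw [J, Finset.sum_sub_distrib, Finset.mul_sum]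

theorem maximizer_of_form {A : Type*} [Fintype A] (η l : ℝ) (w g p : A → ℝ) (hη : 0 < η)
    (hw : ∀ a, 0 < w a) (hp : ∀ a, 0 < p a) (hs : ∑ a, p a = 1)
    (h : ∀ a, η⁻¹ * w a = p a * (l - g a)) :
    IsMaximizer η w g p ∧ ∀ q, IsMaximizer η w g q → q = p := by
  have key : ∀ q : A → ℝ, ∑ a, q a = 1 →
      ∑ a, (g a * p a - η⁻¹ * (w a * Real.log (w a / p a)) + l * (q a - p a)) = J η w g p := by
    intro q hq
    rw [Finset.sum_add_distrib, ← Finset.mul_sum, J_eq_sum,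
      Finset.sum_sub_distrib q p, hq, hs]
    ring
  refine ⟨⟨fun a => (hp a).le, hs, hp, ?_⟩, ?_⟩
  · intro q _ hq hq0
    rw [← key q hq, J_eq_sum]
    exact Finset.sum_le_sum fun a _ => term_le _ _ _ _ _ _ hη (hw a) (hp a) (hq0 a) (h a)
  · rintro q ⟨_, hq, hq0, hm⟩
    by_contra hne
    obtain ⟨b, hb⟩ := Function.ne_iff.1 hne
    have h1 := hm p (fun a => (hp a).le) hs hp
    rw [← key q hq, J_eq_sum η w g q] at h1
    refine absurd h1 (not_le.2 ?_)
    exact Finset.sum_lt_sum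
      (fun a _ => term_le _ _ _ _ _ _ hη (hw a) (hp a) (hq0 a) (h a))
      ⟨b, Finset.mem_univ b, term_lt _ _ _ _ _ _ hη (hw b) (hp b) (hq0 b) (h b) hb⟩

theorem sum_alternating (K : ℕ) (u : ℕ → ℝ) :
    ∑ a : Fin (2 * K), (if (a : ℕ) % 2 = 0 then u ((a : ℕ) / 2) else -u ((a : ℕ) / 2)) = 0 := by
  refine Finset.sum_involution
    (fun a _ => if h : (a : ℕ) % 2 = 0 then ⟨(a : ℕ) + 1, by have := a.isLt; omega⟩
      else ⟨(a : ℕ) - 1, by have := a.isLt; omega⟩) ?_ ?_ ?_ ?_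
  · intro a _
    by_cases h : (a : ℕ) % 2 = 0
    · have h1 : ((a : ℕ) + 1) % 2 ≠ 0 := by omega
      have h2 : ((a : ℕ) + 1) / 2 = (a : ℕ) / 2 := by omega
      simp only [h, h1, h2, dite_true, if_true, if_false]
      ring
    · have h1 : ((a : ℕ) - 1) % 2 = 0 := by omega
      have h2 : ((a : ℕ) - 1) / 2 = (a : ℕ) / 2 := by omega
      simp only [h, h1, h2, dite_false, if_true, if_false]
      ring
  · intro a _ _ h
    have h' := congrArg Fin.val h
    by_cases h0 : (a : ℕ) % 2 = 0
    · simp [h0] at h'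
    · simp [h0] at h'
      omega
  · intro a _
    exact Finset.mem_univ _
  · intro a _
    apply Fin.ext
    by_cases h0 : (a : ℕ) % 2 = 0
    · have h1 : ((a : ℕ) + 1) % 2 ≠ 0 := by omega
      simp [h0, h1]
    · have h1 : ((a : ℕ) - 1) % 2 = 0 := by omega
      simp [h0, h1]
      omega

/-- Closed form of the forward-KL-regularized optimal policy for the
hard instances: for an `A = 2K`-armed bandit with uniform reference policy and rewards
`r(2k) = 1/2 - v_k c`, `r(2k+1) = 1/2 + v_k c` (signs `v_k ∈ {±1}`, `c ∈ (0, 1/4)`),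
the unique maximizer is `π*(a) = (1 - κ_a ω)/A` with `κ_{2k} = v_k`, `κ_{2k+1} = -v_k`
and `ω = 2ηc/(1 + √(1 + 4η²c²))`; equivalently `π*(a) = η⁻¹ A⁻¹/(λ - r(a))` with
`λ - 1/2 = (1 + √(1 + 4η²c²))/(2η)`, the same value for every choice of the signs. -/
theorem stmt18 (K : ℕ) (hK : 1 ≤ K) (η c : ℝ) (hη : 0 < η)
    (hc : c ∈ Set.Ioo (0 : ℝ) (1 / 4))
    (v : Fin K → ℝ) (hv : ∀ k, v k = 1 ∨ v k = -1)
    (r : Fin (2 * K) → ℝ)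
    (hrdef : ∀ a : Fin (2 * K),
      r a = if (a : ℕ) % 2 = 0 then
              1 / 2 - v ⟨(a : ℕ) / 2, by have := a.isLt; omega⟩ * c
            else
              1 / 2 + v ⟨(a : ℕ) / 2, by have := a.isLt; omega⟩ * c) :
    let ω : ℝ := 2 * η * c / (1 + Real.sqrt (1 + 4 * η ^ 2 * c ^ 2));
    let κ : Fin (2 * K) → ℝ := fun a =>
      if (a : ℕ) % 2 = 0 then v ⟨(a : ℕ) / 2, by have := a.isLt; omega⟩
      else -v ⟨(a : ℕ) / 2, by have := a.isLt; omega⟩;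
    let πs : Fin (2 * K) → ℝ := fun a => (1 - κ a * ω) / (2 * K);
    IsMaximizer η (fun _ => ((2 * K : ℕ) : ℝ)⁻¹) r πs ∧
    (∀ q : Fin (2 * K) → ℝ,
      IsMaximizer η (fun _ => ((2 * K : ℕ) : ℝ)⁻¹) r q → q = πs) ∧
    (∀ a, πs a = η⁻¹ * ((2 * K : ℕ) : ℝ)⁻¹ /
      ((1 / 2 + (1 + Real.sqrt (1 + 4 * η ^ 2 * c ^ 2)) / (2 * η)) - r a)) := by
  intro ω κ πs
  obtain ⟨hc0, _⟩ := hc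
  have hK0 : (0 : ℝ) < K := by exact_mod_cast hK
  have hr : ∀ a, r a = 1 / 2 - κ a * c := by
    intro a
    rw [hrdef a]
    simp only [κ]
    split_ifs <;> ring
  have hκ : ∀ a, κ a = 1 ∨ κ a = -1 := by
    intro a
    simp only [κ]
    split_ifs
    · exact hv _
    · rcases hv ⟨(a : ℕ) / 2, by have := a.isLt; omega⟩ with h | h <;> simp [h]
  have hκs : ∑ a, κ a = 0 := by
    rw [← sum_alternating K (fun n => if h : n < K then v ⟨n, h⟩ else 0)]
    refine Finset.sum_congr rfl fun a _ => ?_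
    have ha : (a : ℕ) / 2 < K := by have := a.isLt; omega
    simp only [κ, ha, dite_true]
  clear_value κ
  have hs0 := Real.sqrt_nonneg (1 + 4 * η ^ 2 * c ^ 2)
  have hsq : Real.sqrt (1 + 4 * η ^ 2 * c ^ 2) ^ 2 = 1 + 4 * η ^ 2 * c ^ 2 :=
    Real.sq_sqrt (by positivity)
  have hω : ω = 2 * η * c / (1 + Real.sqrt (1 + 4 * η ^ 2 * c ^ 2)) := rfl
  clear_value ω
  generalize Real.sqrt (1 + 4 * η ^ 2 * c ^ 2) = s at *
  have hx : 0 < η * c := by positivity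
  have hω' : ω * (1 + s) = 2 * (η * c) := by rw [hω]; field_simp
  have hωx : 2 * (η * c) * ω = s - 1 := by
    have : (2 * (η * c) * ω - (s - 1)) * (1 + s) = 0 := by
      linear_combination 2 * (η * c) * hω' - hsq
    rcases mul_eq_zero.1 this with h | h <;> linarith
  have hω0 : 0 < ω := by rw [hω]; positivity
  have hω1 : ω < 1 := by
    have h1 : 2 * (η * c) < 1 + s := by nlinarith
    nlinarith
  have hκ2 : ∀ a, κ a ^ 2 = 1 := by
    intro a
    rcases hκ a with h | h <;> rw [h] <;> norm_num
  have hpos : ∀ a, 0 < πs a := by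
    intro a
    have : 0 < 1 - κ a * ω := by rcases hκ a with h | h <;> rw [h] <;> linarith
    exact div_pos this (by positivity)
  have hsum : ∑ a, πs a = 1 := by
    simp only [πs]
    rw [← Finset.sum_div, Finset.sum_sub_distrib, ← Finset.sum_mul, hκs]
    simp only [Finset.sum_const, Finset.card_univ, Fintype.card_fin, nsmul_eq_mul]
    push_cast
    field_simp
    ring
  have hform : ∀ a, η⁻¹ * ((2 * K : ℕ) : ℝ)⁻¹ =
      πs a * ((1 / 2 + (1 + s) / (2 * η)) - r a) := by
    intro a
    rw [hr a]
    simp only [πs]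
    push_cast
    field_simp
    linear_combination κ a * hω' + hωx + 2 * η * c * ω * (hκ2 a)
  obtain ⟨hA, hB⟩ := maximizer_of_form η (1 / 2 + (1 + s) / (2 * η))
    (fun _ => ((2 * K : ℕ) : ℝ)⁻¹) r πs hη (fun _ => by positivity) hpos hsum hform
  refine ⟨hA, hB, fun a => ?_⟩
  have hne : (1 / 2 + (1 + s) / (2 * η)) - r a ≠ 0 := by
    intro h0
    have h1 := hform a
    rw [h0, mul_zero] at h1
    have : 0 < η⁻¹ * ((2 * K : ℕ) : ℝ)⁻¹ := by positivity
    linarith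
  rw [hform a, mul_div_assoc, div_self hne, mul_one]
end
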